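/- arXiv:1611.07916 — 4 statements merged into one kernel-verified Lean document; each statement's English description precedes it below -/
import Mathlib

section
/- Let d ≥ 3 and let T be a d-leafed ribbon tree with exactly d − 3 internal edges, i.e. k(T) = d − 3. Then T contains exactly one internal vertex of degree 4, and every other internal vertex of T has degree exactly 3. -/
/-- The degree of a vertex, as the cardinality of its neighbor set. -/
noncomputable def treeDeg {V : Type*} (G : SimpleGraph V) (v : V) : ℕ := (G.neighborSet v).ncard

/-- A vertex is external if it has degree `1`. -/
def ExternalV {V : Type*} (G : SimpleGraph V) (v : V) : Prop := treeDeg G v = 1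

/-- An edge is internal if both of its endpoints are internal (non-external) vertices. -/
def InternalEdge {V : Type*} (G : SimpleGraph V) (e : Sym2 V) : Prop :=
  ∀ v ∈ e, ¬ ExternalV G v

/-- `k(T)`: the number of internal edges. -/
noncomputable def internalEdgeCount {V : Type*} (G : SimpleGraph V) : ℕ :=
  {e : Sym2 V | e ∈ G.edgeSet ∧ InternalEdge G e}.ncard

/-!
The internal vertices of a tree `T` span a subtree, since no path passes through a vertex of
degree `1`. Its edges are the `k` internal edges of `T`, so `T` has `k + 1` internal vertices, and
with `ℓ` external vertices the handshake formula gives total internal degree `ℓ + 2 k`. For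
`ℓ = d + 1` and `k = d - 3` this is one more than `3 (k + 1)`: the internal degrees, all at least
`3`, exceed `3` by exactly `1` altogether.
-/

open Finset

theorem exists_eq_add_one_of_sum_eq_mul_card_add_one {ι : Type*} {s : Finset ι} {f : ι → ℕ}
    {c : ℕ} (hle : ∀ i ∈ s, c ≤ f i) (hsum : ∑ i ∈ s, f i = c * #s + 1) :
    ∃ i ∈ s, f i = c + 1 ∧ ∀ j ∈ s, j ≠ i → f j = c := by
  classical
  have hexcess : ∑ i ∈ s, (f i - c) = 1 := by
    rw [sum_tsub_distrib s hle, hsum, sum_const, smul_eq_mul, mul_comm, Nat.add_sub_cancel_left]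
  obtain ⟨i, hi, hne⟩ := exists_ne_zero_of_sum_ne_zero (hexcess.trans_ne one_ne_zero)
  rw [← add_sum_erase s _ hi] at hexcess
  have hrest : ∑ j ∈ s.erase i, (f j - c) = 0 := by lia
  refine ⟨i, hi, by lia, fun j hj hji ↦ (hle j hj).antisymm' ?_⟩
  exact Nat.sub_eq_zero_iff_le.1 (sum_eq_zero_iff.1 hrest j (mem_erase.2 ⟨hji, hj⟩))

section InternalGraph

variable {V : Type*} (G : SimpleGraph V)

theorem image_edgeSet_induce (s : Set V) :
    Sym2.map Subtype.val '' (G.induce s).edgeSet = {e | e ∈ G.edgeSet ∧ ∀ v ∈ e, v ∈ s} := by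
  ext e
  constructor
  · rintro ⟨⟨v, w⟩, hvw, rfl⟩
    exact ⟨hvw, Sym2.ball.2 ⟨v.2, w.2⟩⟩
  · rintro ⟨he, hs⟩
    refine ⟨e.attachWith hs, ?_, Sym2.attachWith_map_subtypeVal hs⟩
    cases e
    exact he

theorem treeDeg_eq_degree (v : V) [Fintype (G.neighborSet v)] :
    treeDeg G v = G.degree v := by
  rw [treeDeg, ← Nat.card_coe_set_eq, Nat.card_eq_fintype_card, G.card_neighborSet_eq_degree]

/-- The subgraph spanned by the internal vertices, whose edges are the internal edges of `G`. -/
abbrev internalGraph : SimpleGraph {v | ¬ ExternalV G v} :=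
  G.induce {v | ¬ ExternalV G v}

theorem internalEdgeCount_eq_ncard_edgeSet :
    internalEdgeCount G = (internalGraph G).edgeSet.ncard := by
  rw [← Set.ncard_image_of_injective _ (Sym2.map.injective Subtype.val_injective),
    internalGraph, image_edgeSet_induce]
  rfl

variable {G}

theorem ExternalV.subsingleton_neighborSet {v : V} (hv : ExternalV G v) :
    (G.neighborSet v).Subsingleton := by
  obtain ⟨w, hw⟩ := Set.ncard_eq_one.1 hv
  exact hw ▸ Set.subsingleton_singleton

theorem isTree_internalGraph (hG : G.IsTree) (hne : ∃ v, ¬ ExternalV G v) :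
    (internalGraph G).IsTree where
  connected :=
    { preconnected := hG.connected.preconnected.induce_of_degree_eq_one fun _ hv ↦
        (not_not.1 hv).subsingleton_neighborSet
      nonempty := nonempty_subtype.2 hne }
  isAcyclic := hG.isAcyclic.induce _

theorem card_not_externalV [Fintype V] [DecidablePred (ExternalV G)] (hG : G.IsTree)
    (hne : ∃ v, ¬ ExternalV G v) : #{v | ¬ ExternalV G v} = internalEdgeCount G + 1 := by
  have htree := (SimpleGraph.isTree_iff_connected_and_card.1 (isTree_internalGraph hG hne)).2
  rw [Nat.card_coe_set_eq, ← internalEdgeCount_eq_ncard_edgeSet] at htree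
  rw [htree, ← Fintype.card_subtype, ← Nat.card_eq_fintype_card]
  rfl

theorem sum_treeDeg_add_two [Fintype V] (hG : G.IsTree) :
    ∑ v, treeDeg G v + 2 = 2 * Fintype.card V := by
  classical
  simp only [treeDeg_eq_degree, G.sum_degrees_eq_twice_card_edges, ← hG.card_edgeFinset, mul_add,
    mul_one]

theorem exists_not_externalV [Fintype V] (hG : G.IsTree) (hcard : Fintype.card V ≠ 2) :
    ∃ v, ¬ ExternalV G v := by
  by_contra! hext
  have hsum : ∑ v, treeDeg G v = Fintype.card V := by
    rw [sum_congr rfl fun v _ ↦ hext v, ← card_eq_sum_ones, card_univ]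
  have := sum_treeDeg_add_two hG
  lia

theorem sum_treeDeg_not_externalV [Fintype V] [DecidablePred (ExternalV G)] (hG : G.IsTree)
    (hne : ∃ v, ¬ ExternalV G v) :
    ∑ v with ¬ ExternalV G v, treeDeg G v = #{v | ExternalV G v} + 2 * internalEdgeCount G := by
  have hinternal := card_not_externalV hG hne
  have hexternal : ∑ v with ExternalV G v, treeDeg G v = #{v | ExternalV G v} := by
    rw [card_eq_sum_ones]
    exact sum_congr rfl fun v hv ↦ (mem_filter_univ v).1 hv
  have hdeg := sum_treeDeg_add_two hG
  rw [← sum_filter_add_sum_filter_not univ (ExternalV G), ← card_univ,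
    ← card_filter_add_card_filter_not (ExternalV G)] at hdeg
  lia

end InternalGraph

/-- Let `d ≥ 3` and let `T` be a `d`-leafed ribbon tree with exactly `d - 3` internal
edges, `k(T) = d - 3`.  Then `T` contains exactly one internal vertex of degree `4`, and
every other internal vertex of `T` has degree exactly `3`. -/
theorem ribbonTree_codimOne_unique_fourValent {V : Type*} [Fintype V]
    (G : SimpleGraph V) (hG : G.IsTree) (d : ℕ) (hd : 3 ≤ d)
    (ext : Fin (d + 1) → V) (hinj : Function.Injective ext)
    (hext : ∀ i, ExternalV G (ext i))
    (hsurj : ∀ v, ExternalV G v → ∃ i, v = ext i)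
    (hint : ∀ v, ¬ ExternalV G v → 3 ≤ treeDeg G v)
    (hk : internalEdgeCount G = d - 3) :
    ∃ v₀ : V, (¬ ExternalV G v₀ ∧ treeDeg G v₀ = 4) ∧
      ∀ v : V, ¬ ExternalV G v → v ≠ v₀ → treeDeg G v = 3 := by
  classical
  have hext_card : #{v | ExternalV G v} = d + 1 := by
    have himage : ({v | ExternalV G v} : Finset V) = univ.image ext := by
      ext v
      simpa [eq_comm] using ⟨hsurj v, fun ⟨i, hi⟩ ↦ hi ▸ hext i⟩
    rw [himage, card_image_of_injective _ hinj, card_fin]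
  have hne : ∃ v, ¬ ExternalV G v := by
    refine exists_not_externalV hG fun hcard ↦ ?_
    have := card_le_univ ({v | ExternalV G v} : Finset V)
    lia
  have hcard := card_not_externalV hG hne
  have hsum : ∑ v with ¬ ExternalV G v, treeDeg G v = 3 * #{v | ¬ ExternalV G v} + 1 := by
    rw [sum_treeDeg_not_externalV hG hne, hext_card, hcard, hk]
    lia
  obtain ⟨v₀, hv₀, hdeg, hrest⟩ := exists_eq_add_one_of_sum_eq_mul_card_add_one
    (fun v hv ↦ hint v ((mem_filter_univ v).1 hv)) hsum
  exact ⟨v₀, ⟨(mem_filter_univ v₀).1 hv₀, hdeg⟩,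
    fun v hv ↦ hrest v ((mem_filter_univ v).2 hv)⟩
end

section
/- Let d ≥ 2 and let T be a d-leafed ribbon tree. Then v_in(e_0(T)) = v_0, and for every edge e of T with e ≠ e_0(T) the incoming vertex v_in(e) is an internal vertex of T. Consequently the number of edges of T whose incoming vertex is internal equals k(T) + d. -/
/-- `Incoming G r u w` says that `{u, w}` is an edge of `G` whose incoming vertex
(relative to the root `r`) is `u` and whose outgoing vertex is `w`: `u` and `w` are
adjacent and `u` lies on the unique path in `G` from `r` to `w`. -/
def Incoming {V : Type*} (G : SimpleGraph V) (r u w : V) : Prop :=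
  G.Adj u w ∧ ∀ p : G.Walk r w, p.IsPath → u ∈ p.support

/-! In a tree with more than two vertices no two external vertices are adjacent, so each external
vertex has its own external edge. An external vertex lies on a path only as an endpoint; as the
incoming vertex of an edge lies on the path from the root to the outgoing one and is not the
latter, it is internal unless it is the root. The edges with internal incoming vertex are therefore
all edges but the one at the root: the internal edges, together with one external edge for each
external vertex other than the root. -/

section

variable {V : Type*} {G : SimpleGraph V} {r u v w : V}

namespace ExternalV

theorem exists_adj (hv : ExternalV G v) : ∃ w, G.Adj v w := by
  obtain ⟨w, hw⟩ := Set.ncard_eq_one.1 hv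
  exact ⟨w, hw.ge rfl⟩

theorem finite_neighborSet (hv : ExternalV G v) : (G.neighborSet v).Finite :=
  Set.finite_of_ncard_pos (hv.ge : 0 < treeDeg G v)

theorem eq_of_adj (hv : ExternalV G v) (hu : G.Adj v u) (hw : G.Adj v w) : u = w :=
  (Set.ncard_le_one hv.finite_neighborSet).1 hv.le u hu w hw

theorem eq_or_eq_of_mem_support (hv : ExternalV G v) {p : G.Walk u w} (hp : p.IsPath)
    (hvp : v ∈ p.support) : v = u ∨ v = w := by
  by_contra! hne
  obtain ⟨i, rfl, hi⟩ := SimpleGraph.Walk.mem_support_iff_exists_getVert.1 hvp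
  have hi_zero : i ≠ 0 := by
    rintro rfl
    exact hne.1 p.getVert_zero
  have hi_lt : i < p.length := by
    refine hi.lt_of_ne ?_
    rintro rfl
    exact hne.2 p.getVert_length
  have htwo : 2 ≤ treeDeg G (p.getVert i) :=
    (hp.ncard_neighborSet_toSubgraph_internal_eq_two hi_zero hi_lt).ge.trans
      (Set.ncard_le_ncard (p.toSubgraph.neighborSet_subset _) hv.finite_neighborSet)
  exact htwo.not_gt (hv.trans_lt one_lt_two)

theorem eq_or_eq_of_adj (hG : G.Preconnected) (hu : ExternalV G u) (hv : ExternalV G v)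
    (huv : G.Adj u v) (w : V) : w = u ∨ w = v := by
  obtain ⟨p, hp⟩ := (hG u w).exists_isPath
  by_cases hnil : p.Nil
  · exact Or.inl hnil.eq.symm
  · have hv_mem : v ∈ p.support :=
      hu.eq_of_adj (p.adj_snd hnil) huv ▸ p.getVert_mem_support 1
    exact Or.inr ((hv.eq_or_eq_of_mem_support hp hv_mem).resolve_left huv.ne').symm

theorem not_externalV_of_adj (hG : G.Preconnected) (hV : 2 < ENat.card V)
    (hu : ExternalV G u) (huv : G.Adj u v) : ¬ ExternalV G v := by
  intro hv
  have huniv : Set.univ ⊆ ({u, v} : Set V) := fun w _ => hu.eq_or_eq_of_adj hG hv huv w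
  have hcard : ENat.card V ≤ 2 := by
    rw [← Set.encard_univ, ← Set.encard_pair huv.ne]
    exact Set.encard_le_encard huniv
  exact hcard.not_gt hV

theorem eq_of_mem_edge (hG : G.Preconnected) (hV : 2 < ENat.card V) {e : Sym2 V}
    (he : e ∈ G.edgeSet) (hu : ExternalV G u) (hv : ExternalV G v) (hue : u ∈ e) (hve : v ∈ e) :
    u = v := by
  by_contra huv
  obtain rfl := (Sym2.mem_and_mem_iff huv).1 ⟨hue, hve⟩
  exact hu.not_externalV_of_adj hG hV he hv

end ExternalV

theorem encard_edges_meeting_externalV (hG : G.Preconnected) (hV : 2 < ENat.card V) {S : Set V}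
    (hS : ∀ v ∈ S, ExternalV G v) :
    {e | e ∈ G.edgeSet ∧ ∃ v ∈ S, v ∈ e}.encard = S.encard := by
  choose! neighbor hadj using fun v (hv : v ∈ S) => (hS v hv).exists_adj
  have hinj : Set.InjOn (fun v => s(v, neighbor v)) S := by
    intro u hu v hv (huv : s(u, neighbor u) = s(v, neighbor v))
    have hmem : u ∈ s(v, neighbor v) := huv ▸ Sym2.mem_mk_left u (neighbor u)
    exact (hS u hu).eq_of_mem_edge hG hV (hadj v hv) (hS v hv) hmem (Sym2.mem_mk_left v _)
  have himage : {e | e ∈ G.edgeSet ∧ ∃ v ∈ S, v ∈ e} = (fun v => s(v, neighbor v)) '' S := by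
    ext e
    constructor
    · rintro ⟨he, v, hv, w, rfl⟩
      exact ⟨v, hv, congrArg (s(v, ·)) ((hS v hv).eq_of_adj (hadj v hv) he)⟩
    · rintro ⟨v, hv, rfl⟩
      exact ⟨hadj v hv, v, hv, Sym2.mem_mk_left v _⟩
  rw [himage, hinj.encard_image]

theorem incoming_or_incoming_of_adj (hG : G.IsAcyclic) (r : V) (huv : G.Adj u v) :
    Incoming G r u v ∨ Incoming G r v u := by
  by_cases h : Incoming G r u v
  · exact Or.inl h
  · obtain ⟨p, hp, hup⟩ : ∃ p : G.Walk r v, p.IsPath ∧ u ∉ p.support := by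
      simpa [Incoming, huv] using h
    exact Or.inr ⟨huv.symm, fun q hq =>
      hG.mem_support_of_ne_mem_support_of_adj_of_isPath hq hp huv hup⟩

namespace Incoming

theorem root_left (hrw : G.Adj r w) : Incoming G r r w :=
  ⟨hrw, fun p _ => p.start_mem_support⟩

theorem ne_root (h : Incoming G r u w) : w ≠ r := by
  rintro rfl
  exact h.1.ne (by simpa using h.2 .nil .nil)

theorem not_externalV (hG : G.Preconnected) (h : Incoming G r u w) (hu : u ≠ r) :
    ¬ ExternalV G u := by
  intro hext
  obtain ⟨p, hp⟩ := (hG r w).exists_isPath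
  exact (hext.eq_or_eq_of_mem_support hp (h.2 p hp)).elim hu h.1.ne

end Incoming

theorem exists_incoming_not_externalV_iff (hG : G.IsTree) (hr : ExternalV G r) {e : Sym2 V}
    (he : e ∈ G.edgeSet) :
    (∃ u w, e = s(u, w) ∧ Incoming G r u w ∧ ¬ ExternalV G u) ↔ r ∉ e := by
  constructor
  · rintro ⟨u, w, rfl, huw, hu⟩ hre
    rcases Sym2.mem_iff.1 hre with rfl | rfl
    · exact hu hr
    · exact huw.ne_root rfl
  · intro hre
    obtain ⟨u, w, rfl, huw⟩ : ∃ u w, e = s(u, w) ∧ Incoming G r u w := by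
      induction e with | h u w
      exact (incoming_or_incoming_of_adj hG.isAcyclic r he).elim
        (⟨u, w, rfl, ·⟩) (⟨w, u, Sym2.eq_swap, ·⟩)
    have hur : u ≠ r := fun h => hre (h ▸ Sym2.mem_mk_left u w)
    exact ⟨u, w, rfl, huw, huw.not_externalV hG.preconnected hur⟩

theorem root_notMem_edge_iff (hG : G.Preconnected) (hV : 2 < ENat.card V) (hr : ExternalV G r)
    {e : Sym2 V} (he : e ∈ G.edgeSet) :
    r ∉ e ↔ InternalEdge G e ∨ ∃ v ∈ {v | ExternalV G v} \ {r}, v ∈ e := by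
  constructor
  · intro hre
    refine or_iff_not_imp_left.2 fun hint => ?_
    obtain ⟨v, hve, hv⟩ : ∃ v ∈ e, ExternalV G v := by simpa [InternalEdge] using hint
    exact ⟨v, ⟨hv, ne_of_mem_of_not_mem hve hre⟩, hve⟩
  · rintro (hint | ⟨v, ⟨hv, hvr⟩, hve⟩) hre
    · exact hint r hre hr
    · exact hvr (hv.eq_of_mem_edge hG hV he hr hve hre)

theorem encard_edges_root_notMem (hG : G.Preconnected) (hV : 2 < ENat.card V)
    (hr : ExternalV G r) :
    {e | e ∈ G.edgeSet ∧ r ∉ e}.encard =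
      {e | e ∈ G.edgeSet ∧ InternalEdge G e}.encard + ({v | ExternalV G v} \ {r}).encard := by
  have hunion : {e | e ∈ G.edgeSet ∧ r ∉ e} = {e | e ∈ G.edgeSet ∧ InternalEdge G e} ∪
      {e | e ∈ G.edgeSet ∧ ∃ v ∈ {v | ExternalV G v} \ {r}, v ∈ e} := by
    ext e
    exact (and_congr_right (root_notMem_edge_iff hG hV hr)).trans and_or_left
  have hdisjoint : Disjoint {e | e ∈ G.edgeSet ∧ InternalEdge G e}
      {e | e ∈ G.edgeSet ∧ ∃ v ∈ {v | ExternalV G v} \ {r}, v ∈ e} :=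
    Set.disjoint_left.2 fun _ ⟨_, hint⟩ ⟨_, v, hv, hve⟩ => hint v hve hv.1
  rw [hunion, Set.encard_union_eq hdisjoint,
    encard_edges_meeting_externalV hG hV fun _ hv => hv.1]

theorem ribbonTree_incoming_internal_general (hG : G.IsTree) (hV : 2 < ENat.card V)
    (hr : ExternalV G r) :
    (∀ w, G.Adj r w → Incoming G r r w) ∧
    (∀ u w, Incoming G r u w → u ≠ r → ¬ ExternalV G u) ∧
    {e | e ∈ G.edgeSet ∧ ∃ u w, e = s(u, w) ∧ Incoming G r u w ∧ ¬ ExternalV G u}.encard =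
      {e | e ∈ G.edgeSet ∧ InternalEdge G e}.encard + ({v | ExternalV G v} \ {r}).encard := by
  refine ⟨fun _ => Incoming.root_left, fun _ _ => Incoming.not_externalV hG.preconnected, ?_⟩
  rw [← encard_edges_root_notMem hG.preconnected hV hr]
  congr 1
  ext e
  exact and_congr_right (exists_incoming_not_externalV_iff hG hr)

end

/-- Let `d ≥ 2` and let `T` be a `d`-leafed ribbon tree with root `v_0 = ext 0`.
Then `v_in(e_0(T)) = v_0` (the incoming vertex of the rooted edge is the root), for every
edge `e ≠ e_0(T)` (i.e. not containing the root) the incoming vertex `v_in(e)` is an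
internal vertex of `T`, and consequently the number of edges of `T` whose incoming
vertex is internal equals `k(T) + d`. -/
theorem ribbonTree_incoming_internal {V : Type*} [Fintype V]
    (G : SimpleGraph V) (hG : G.IsTree) (d : ℕ) (hd : 2 ≤ d)
    (ext : Fin (d + 1) → V) (hinj : Function.Injective ext)
    (hext : ∀ i, ExternalV G (ext i))
    (hsurj : ∀ v, ExternalV G v → ∃ i, v = ext i)
    (hint : ∀ v, ¬ ExternalV G v → 3 ≤ treeDeg G v) :
    (∀ w : V, G.Adj (ext 0) w → Incoming G (ext 0) (ext 0) w) ∧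
    (∀ u w : V, Incoming G (ext 0) u w → u ≠ ext 0 → w ≠ ext 0 → ¬ ExternalV G u) ∧
    {e : Sym2 V | e ∈ G.edgeSet ∧
        ∃ u w : V, e = s(u, w) ∧ Incoming G (ext 0) u w ∧ ¬ ExternalV G u}.ncard
      = internalEdgeCount G + d := by
  have hV : 2 < ENat.card V := calc
    (2 : ℕ∞) < (d + 1 : ℕ) := by exact_mod_cast Nat.lt_succ_of_le hd
    _ = ENat.card (Fin (d + 1)) := by simp
    _ ≤ ENat.card V := ENat.card_le_card_of_injective hinj
  have hexternal : {v | ExternalV G v} = Set.range ext := Set.Subset.antisymm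
    (fun v hv => (hsurj v hv).imp fun _ => Eq.symm) (Set.range_subset_iff.2 hext)
  have hleaves : ({v | ExternalV G v} \ {ext 0}).encard = d := by
    rw [hexternal, Set.encard_sdiff_singleton_of_mem (Set.mem_range_self 0), ← Set.image_univ,
      hinj.encard_image, Set.encard_univ, ENat.card_eq_coe_fintype_card, Fintype.card_fin]
    norm_cast
  obtain ⟨hroot, hinternal, hcount⟩ := ribbonTree_incoming_internal_general hG hV (hext 0)
  refine ⟨hroot, fun u w huw hu _ => hinternal u w huw hu, ?_⟩
  rw [hleaves] at hcount
  simp only [← (Set.toFinite _).cast_ncard_eq] at hcount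
  exact_mod_cast hcount
end

section
/- Let d ≥ 1, let i and l be natural numbers with 1 ≤ i ≤ d and 0 ≤ l ≤ d − i, and let μ_0, μ_1, …, μ_d and y be integers satisfying y = (Σ_{q=i}^{i+l} μ_q) + 1 − l. Then σ(μ_0, μ_1, …, μ_d) + σ(μ_0, μ_1, …, μ_{i−1}, y, μ_{i+l+1}, …, μ_d) + σ(y, μ_i, …, μ_{i+l}) ≡ (n+1)·(l·♣_1^{i−1} + d·l + d + l + i) (mod 2). -/
/-- For `m ≥ 1` and integers `a_0, a_1, …, a_m` (given as `a : ℕ → ℤ`), the sign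
exponent `σ(a_0, …, a_m) := (n+1) · (a_0 + ∑_{j=1}^m (m+1-j) · a_j)` twisting the
oriented intersection numbers in the definition of the A∞-operation coefficients. -/
def sigmaA (n : ℤ) (m : ℕ) (a : ℕ → ℤ) : ℤ :=
  (n + 1) * (a 0 + ∑ j ∈ Finset.Icc 1 m, ((m : ℤ) + 1 - (j : ℤ)) * a j)

/-!
Split `μ_1, …, μ_d` into the consecutive blocks `A = (μ_1, …, μ_{i-1})`, `B = (μ_i, …, μ_{i+l})`
and `C`, of lengths `p = i - 1`, `l + 1` and `c`. Write `W` for the sum of all partial sums, so that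
`σ(a_0, …, a_m) = (n + 1) (a_0 + W(a_1, …, a_m))`. For a concatenation,
`W(XY) = W(X) + |Y| ∑ X + W(Y)`. Hence `W(ABC) + W(AyC) + W(B)` contains each of `W(A)`, `W(B)`,
`W(C)` twice, and modulo `2` only `l ∑ A + c ∑ B + (c + 1) y` survives. The leading terms of the
three exponents contribute `2 μ_0 + y`, and the relation `y = ∑ B + 1 - l` turns the total into
`l ∑ A + c (l + 1)`, which agrees with the right-hand side because `d = p + l + 1 + c` and
`l (l + 1)` is even.
-/

/-- The sum of the first `m` partial sums `a 0`, `a 0 + a 1`, …, `a 0 + ⋯ + a (m - 1)` of `a`.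
By Abel summation this is the weighted sum in `sigmaA`, shifted so that indices start at `0`; in
this form no subtraction occurs and concatenation of sequences is easy to describe. -/
def sumPartialSums {M : Type*} [AddCommMonoid M] (m : ℕ) (a : ℕ → M) : M :=
  ∑ r ∈ Finset.range m, ∑ k ∈ Finset.range (r + 1), a k

section AddCommMonoid

variable {M : Type*} [AddCommMonoid M]

theorem sumPartialSums_succ (m : ℕ) (a : ℕ → M) :
    sumPartialSums (m + 1) a = sumPartialSums m a + ∑ k ∈ Finset.range (m + 1), a k :=
  Finset.sum_range_succ _ m

theorem sumPartialSums_one (a : ℕ → M) : sumPartialSums 1 a = a 0 := by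
  simp [sumPartialSums]

theorem sumPartialSums_congr {m : ℕ} {a b : ℕ → M} (h : ∀ k < m, a k = b k) :
    sumPartialSums m a = sumPartialSums m b :=
  Finset.sum_congr rfl fun r hr ↦ Finset.sum_congr rfl fun k hk ↦
    h k (by rw [Finset.mem_range] at hr hk; omega)

theorem sumPartialSums_add (p c : ℕ) (a : ℕ → M) :
    sumPartialSums (p + c) a =
      sumPartialSums p a + c • ∑ k ∈ Finset.range p, a k +
        sumPartialSums c (fun k ↦ a (p + k)) := by
  simp only [sumPartialSums, Finset.sum_range_add _ p, add_assoc p, Finset.sum_add_distrib,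
    Finset.sum_const, Finset.card_range, add_assoc]

theorem sumPartialSums_add_add (p b c : ℕ) (a : ℕ → M) :
    sumPartialSums (p + b + c) a =
      sumPartialSums p a + (b + c) • ∑ k ∈ Finset.range p, a k +
        (sumPartialSums b (fun k ↦ a (p + k)) + c • ∑ k ∈ Finset.range b, a (p + k)) +
        sumPartialSums c (fun k ↦ a (p + b + k)) := by
  rw [sumPartialSums_add, sumPartialSums_add, Finset.sum_range_add, smul_add, add_smul]
  abel

end AddCommMonoid

theorem sumPartialSums_replace_block_modEq (p b c : ℕ) {a u : ℕ → ℤ}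
    (hleft : ∀ k < p, u k = a k) (hright : ∀ k < c, u (p + 1 + k) = a (p + b + k)) :
    sumPartialSums (p + b + c) a + sumPartialSums (p + 1 + c) u +
        sumPartialSums b (fun k ↦ a (p + k)) ≡
      (b + 1) * ∑ k ∈ Finset.range p, a k + c * ∑ k ∈ Finset.range b, a (p + k) +
        (c + 1) * u p [ZMOD 2] := by
  have hsum : ∑ k ∈ Finset.range p, u k = ∑ k ∈ Finset.range p, a k :=
    Finset.sum_congr rfl fun k hk ↦ hleft k (Finset.mem_range.1 hk)
  rw [sumPartialSums_add_add p b, sumPartialSums_add_add p 1, sumPartialSums_congr hleft, hsum,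
    sumPartialSums_congr hright]
  simp only [sumPartialSums_one, Finset.sum_range_one, add_zero, nsmul_eq_mul]
  set A := ∑ k ∈ Finset.range p, a k
  set B := ∑ k ∈ Finset.range b, a (p + k)
  calc
    _ = (b + 1) * A + c * B + (c + 1) * u p +
          2 * (sumPartialSums p a + c * A + sumPartialSums b (fun k ↦ a (p + k)) +
            sumPartialSums c (fun k ↦ a (p + b + k))) := by
      push_cast
      ring
    _ ≡ (b + 1) * A + c * B + (c + 1) * u p [ZMOD 2] := Int.modEq_add_fac_self

theorem sumPartialSums_collapse_block_modEq (p b c : ℕ) {a u : ℕ → ℤ}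
    (hleft : ∀ k < p, u k = a k) (hright : ∀ k < c, u (p + 1 + k) = a (p + b + k))
    (hp : u p ≡ ∑ k ∈ Finset.range b, a (p + k) + b [ZMOD 2]) :
    sumPartialSums (p + b + c) a + sumPartialSums (p + 1 + c) u +
        (u p + sumPartialSums b (fun k ↦ a (p + k))) ≡
      (b + 1) * ∑ k ∈ Finset.range p, a k + c * b [ZMOD 2] := by
  set A := ∑ k ∈ Finset.range p, a k
  set B := ∑ k ∈ Finset.range b, a (p + k)
  calc
    _ = sumPartialSums (p + b + c) a + sumPartialSums (p + 1 + c) u +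
          sumPartialSums b (fun k ↦ a (p + k)) + u p := by ring
    _ ≡ (b + 1) * A + c * B + (c + 1) * u p + u p [ZMOD 2] :=
      (sumPartialSums_replace_block_modEq p b c hleft hright).add_right _
    _ = (b + 1) * A + c * B + (c + 2) * u p := by ring
    _ ≡ (b + 1) * A + c * B + (c + 2) * (B + b) [ZMOD 2] := (hp.mul_left _).add_left _
    _ = (b + 1) * A + c * b + 2 * (c * B + B + b) := by ring
    _ ≡ (b + 1) * A + c * b [ZMOD 2] := Int.modEq_add_fac_self

theorem sum_Icc_add_eq_sum_range {M : Type*} [AddCommMonoid M] (i l : ℕ) (f : ℕ → M) :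
    ∑ q ∈ Finset.Icc i (i + l), f q = ∑ k ∈ Finset.range (l + 1), f (i + k) := by
  rw [← Finset.Ico_add_one_right_eq_Icc, Finset.sum_Ico_eq_sum_range, add_assoc,
    Nat.add_sub_cancel_left]

theorem sum_Icc_one_eq_sum_range {M : Type*} [AddCommMonoid M] (m : ℕ) (f : ℕ → M) :
    ∑ q ∈ Finset.Icc 1 m, f q = ∑ k ∈ Finset.range m, f (k + 1) := by
  rw [Finset.range_eq_Ico, Finset.sum_Ico_add', Finset.Ico_add_one_right_eq_Icc]

theorem sum_Icc_sub_mul_eq_sumPartialSums {R : Type*} [Ring R] (m : ℕ) (a : ℕ → R) :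
    ∑ j ∈ Finset.Icc 1 m, ((m : R) + 1 - j) * a j = sumPartialSums m (fun k ↦ a (k + 1)) := by
  induction m with
  | zero => simp [sumPartialSums]
  | succ m ih =>
    have hsplit (j : ℕ) :
        ((m + 1 : ℕ) + 1 - j : R) * a j = ((m : R) + 1 - j) * a j + a j := by
      push_cast
      noncomm_ring
    rw [sumPartialSums_succ, ← ih, ← sum_Icc_one_eq_sum_range]
    simp only [hsplit, Finset.sum_add_distrib]
    rw [Finset.sum_Icc_succ_top (by omega)]
    simp

theorem sigmaA_eq_sumPartialSums (n : ℤ) (m : ℕ) (a : ℕ → ℤ) :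
    sigmaA n m a = (n + 1) * (a 0 + sumPartialSums m (fun k ↦ a (k + 1))) := by
  rw [sigmaA, sum_Icc_sub_mul_eq_sumPartialSums]

-- `u` and `v` are the outer and inner argument lists of a composition in the `A∞`-relations. Only
-- the parity of the degree relation `v 0 = ∑ + 2 - b` (with `b = l + 1`) matters for the signs.
theorem sigmaA_collapse_block_modEq (n : ℤ) (p b c : ℕ) {a u v : ℕ → ℤ}
    (hleft : ∀ k ≤ p, u k = a k) (hright : ∀ k < c, u (p + 2 + k) = a (p + b + 1 + k))
    (hblock : ∀ k < b, v (k + 1) = a (p + 1 + k)) (hp : u (p + 1) = v 0)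
    (hzero : v 0 ≡ ∑ k ∈ Finset.range b, a (p + 1 + k) + b [ZMOD 2]) :
    sigmaA n (p + b + c) a + sigmaA n (p + 1 + c) u + sigmaA n b v ≡
      (n + 1) * ((b + 1) * ∑ k ∈ Finset.range p, a (k + 1) + c * b) [ZMOD 2] := by
  have hW := sumPartialSums_collapse_block_modEq p b c
    (a := fun k ↦ a (k + 1)) (u := fun k ↦ u (k + 1)) (fun k hk ↦ hleft _ hk)
    (fun k hk ↦ by convert hright k hk using 2 <;> ring)
    (by simpa only [hp, add_right_comm p _ 1] using hzero)
  simp only [hp, add_right_comm p _ 1] at hW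
  simp only [sigmaA_eq_sumPartialSums, ← mul_add, hleft 0 p.zero_le, sumPartialSums_congr hblock]
  refine Int.ModEq.mul_left _ ?_
  calc
    _ = sumPartialSums (p + b + c) (fun k ↦ a (k + 1)) +
          sumPartialSums (p + 1 + c) (fun k ↦ u (k + 1)) +
          (v 0 + sumPartialSums b (fun k ↦ a (p + 1 + k))) + 2 * a 0 := by ring
    _ ≡ _ [ZMOD 2] := Int.modEq_add_fac_self.trans hW

theorem collapse_exponent_modEq (l p c A : ℤ) :
    l * (A - p) + (p + (l + 1) + c) * l + (p + (l + 1) + c) + l + (p + 1) ≡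
      (l + 1 + 1) * A + c * (l + 1) [ZMOD 2] := by
  obtain ⟨t, ht⟩ := Int.even_mul_succ_self l
  calc
    _ = (l + 1 + 1) * A + c * (l + 1) + 2 * (t + l + p + 1 - A) := by linear_combination ht
    _ ≡ _ [ZMOD 2] := Int.modEq_add_fac_self

/-- Let `d ≥ 1`, `1 ≤ i ≤ d`, `0 ≤ l ≤ d - i`, and let `μ_0, …, μ_d` and `y` be integers
with `y = (∑_{q=i}^{i+l} μ_q) + 1 - l`.  Then
`σ(μ_0, …, μ_d) + σ(μ_0, …, μ_{i-1}, y, μ_{i+l+1}, …, μ_d) + σ(y, μ_i, …, μ_{i+l})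
  ≡ (n+1) · (l · ♣_1^{i-1} + d·l + d + l + i) (mod 2)`,
where `♣_1^{i-1} = ∑_{q=1}^{i-1} (μ_q - 1)`. -/
theorem sigma_computation_internal (n : ℤ) (d i l : ℕ)
    (hd : 1 ≤ d) (hi : 1 ≤ i) (hid : i ≤ d) (hil : i + l ≤ d)
    (μ : ℕ → ℤ) (y : ℤ)
    (hy : y = (∑ q ∈ Finset.Icc i (i + l), μ q) + 1 - (l : ℤ)) :
    Int.ModEq 2
      (sigmaA n d μ
        + sigmaA n (d - l) (fun q => if q < i then μ q else if q = i then y else μ (q + l))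
        + sigmaA n (l + 1) (fun q => if q = 0 then y else μ (q + i - 1)))
      ((n + 1) * ((l : ℤ) * (∑ q ∈ Finset.Icc 1 (i - 1), (μ q - 1))
        + (d : ℤ) * (l : ℤ) + (d : ℤ) + (l : ℤ) + (i : ℤ))) := by
  obtain ⟨p, rfl⟩ := Nat.exists_eq_add_of_le' hi
  obtain ⟨c, rfl⟩ := Nat.exists_eq_add_of_le hil
  have hyB : y ≡ ∑ k ∈ Finset.range (l + 1), μ (p + 1 + k) + (l + 1 : ℕ) [ZMOD 2] := by
    rw [hy, sum_Icc_add_eq_sum_range, Int.modEq_iff_dvd]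
    exact ⟨l, by push_cast; ring⟩
  have hclub : ∑ q ∈ Finset.Icc 1 p, (μ q - 1) = ∑ k ∈ Finset.range p, μ (k + 1) - p := by
    simp [sum_Icc_one_eq_sum_range]
  have houter : p + 1 + l + c - l = p + 1 + c := by omega
  have hwhole : p + 1 + l + c = p + (l + 1) + c := by ring
  rw [houter, hwhole, Nat.add_sub_cancel, hclub]
  refine (sigmaA_collapse_block_modEq n p (l + 1) c ?_ ?_ ?_ ?_ hyB).trans ?_
  · grind
  · grind
  · grind
  · simp
  · push_cast
    exact (collapse_exponent_modEq l p c _).symm.mul_left _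
end

section
/- Let d ≥ 3, i ≥ 1 and l ≥ 1 be natural numbers with i + l ≤ d − 1. The assignment τ_L(1) = i+l−1; τ_L(1+j) = j for 1 ≤ j ≤ i−1; τ_L(i+j) = i+l−1+j for 1 ≤ j ≤ d−i−l−1; and τ_L(d−l−1+j) = i−1+j for 1 ≤ j ≤ l−1, defines a permutation of the set {1, 2, …, d−2}, and the sign of this permutation equals (−1)^{(d−i)·l + d − 1}. -/
/-!
Cut `{1, …, d - 2}` into consecutive blocks of lengths `1`, `i - 1`, `d - i - l - 1`, `l - 1`. The
permutation `τ_L` exchanges the last two blocks and then moves the first one past the two that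
follow it. Exchanging adjacent blocks of lengths `m` and `n` takes `m * n` adjacent transpositions,
so `τ_L` has sign `(-1) ^ ((i - 1) + (l - 1) + (d - i - l - 1) * (l - 1))`; this exponent has the
parity of `(d - i) * l + d - 1` because `(l - 1) * l` is even.
-/

/-- The exchange of two adjacent blocks of `Fin N`, of lengths `m` and `n`, that start at position
`p`. Each block keeps its internal order, and all other elements are fixed. -/
def blockSwap {N : ℕ} (p m n : ℕ) (h : p + m + n ≤ N) : Equiv.Perm (Fin N) where
  toFun x := ⟨if x < p then x else if x < p + m then x + n else if x < p + m + n then x - m else x,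
    by grind⟩
  invFun x := ⟨if x < p then x else if x < p + n then x + m else if x < p + m + n then x - n else x,
    by grind⟩
  left_inv x := by grind
  right_inv x := by grind

section BlockSwap

variable {N p m n : ℕ}

theorem val_blockSwap (h : p + m + n ≤ N) (x : Fin N) :
    (blockSwap p m n h x : ℕ) =
      if x < p then (x : ℕ) else if x < p + m then x + n else if x < p + m + n then x - m else x :=
  rfl

theorem blockSwap_zero_right (h : p + m + 0 ≤ N) : blockSwap p m 0 h = 1 := by
  ext x
  grind [val_blockSwap, Equiv.Perm.one_apply]

theorem blockSwap_zero_left (h : p + 0 + n ≤ N) : blockSwap p 0 n h = 1 := by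
  ext x
  grind [val_blockSwap, Equiv.Perm.one_apply]

theorem blockSwap_one_one (h : p + 1 + 1 ≤ N) :
    blockSwap p 1 1 h = Equiv.swap ⟨p, by lia⟩ ⟨p + 1, by lia⟩ := by
  ext x
  grind [val_blockSwap]

theorem blockSwap_add_left {m₁ m₂ : ℕ} (h : p + (m₁ + m₂) + n ≤ N) :
    blockSwap p (m₁ + m₂) n h =
      blockSwap p m₁ n (by lia) * blockSwap (p + m₁) m₂ n (by lia) := by
  ext x
  grind [val_blockSwap, Equiv.Perm.mul_apply]

theorem blockSwap_add_right {n₁ n₂ : ℕ} (h : p + m + (n₁ + n₂) ≤ N) :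
    blockSwap p m (n₁ + n₂) h =
      blockSwap (p + n₁) m n₂ (by lia) * blockSwap p m n₁ (by lia) := by
  ext x
  grind [val_blockSwap, Equiv.Perm.mul_apply]

theorem sign_blockSwap_one_left (h : p + 1 + n ≤ N) :
    Equiv.Perm.sign (blockSwap p 1 n h) = (-1) ^ n := by
  induction n with
  | zero => simp [blockSwap_zero_right]
  | succ n ih =>
    have hne : (⟨p + n, by lia⟩ : Fin N) ≠ ⟨p + n + 1, by lia⟩ := by simp
    rw [blockSwap_add_right, blockSwap_one_one, Equiv.Perm.sign_mul, Equiv.Perm.sign_swap hne, ih,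
      pow_succ']

theorem sign_blockSwap (h : p + m + n ≤ N) :
    Equiv.Perm.sign (blockSwap p m n h) = (-1) ^ (m * n) := by
  induction m with
  | zero => simp [blockSwap_zero_left]
  | succ m ih =>
    rw [blockSwap_add_left, Equiv.Perm.sign_mul, sign_blockSwap_one_left, ih, add_mul, one_mul,
      pow_add]

end BlockSwap

/-- The permutation `τ_L` in terms of block lengths: it rearranges the consecutive blocks
`1 | a | c | b` of `Fin N` into the order `a | b | 1 | c` and fixes any further elements. In the
notation of the paper `a = i - 1`, `b = l - 1`, `c = d - i - l - 1` and `N = d - 2`. -/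
def tauLeft {N : ℕ} (a b c : ℕ) (h : 1 + a + c + b ≤ N) : Equiv.Perm (Fin N) :=
  blockSwap 0 1 (a + b) (by lia) * blockSwap (1 + a) c b h

section TauLeft

variable {N a b c : ℕ}

theorem val_tauLeft (h : 1 + a + c + b ≤ N) (x : Fin N) :
    (tauLeft a b c h x : ℕ) =
      if (x : ℕ) = 0 then a + b else if x < 1 + a then x - 1 else if x < 1 + a + c then x + b
        else if x < 1 + a + c + b then x - (1 + c) else x := by
  grind [tauLeft, val_blockSwap, Equiv.Perm.mul_apply]

theorem sign_tauLeft (h : 1 + a + c + b ≤ N) :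
    Equiv.Perm.sign (tauLeft a b c h) = (-1) ^ (a + b + c * b) := by
  rw [tauLeft, Equiv.Perm.sign_mul, sign_blockSwap, sign_blockSwap, one_mul, ← pow_add]

end TauLeft

/-- Let `d ≥ 3`, `i ≥ 1`, `l ≥ 1` with `i + l ≤ d - 1`.  The assignment (in 1-based
indexing of `{1, …, d-2}`, an element `x : Fin (d-2)` representing the number
`(x : ℕ) + 1`):
`τ_L(1) = i+l-1`; `τ_L(1+j) = j` for `1 ≤ j ≤ i-1`; `τ_L(i+j) = i+l-1+j` for
`1 ≤ j ≤ d-i-l-1`; and `τ_L(d-l-1+j) = i-1+j` for `1 ≤ j ≤ l-1`,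
defines a permutation of `{1, …, d-2}`, whose sign equals `(-1)^{(d-i)·l + d - 1}`.
(This is the order-preserving bijection `τ_e` for a left-handed internal edge `e`
of type `(i,l)` of a `d`-leafed binary ribbon tree.) -/
theorem sign_tau_left (d i l : ℕ) (hd : 3 ≤ d) (hi : 1 ≤ i) (hl : 1 ≤ l)
    (hil : i + l ≤ d - 1) :
    ∃ τ : Equiv.Perm (Fin (d - 2)),
      (∀ x : Fin (d - 2), (x : ℕ) + 1 = 1 → ((τ x : ℕ) + 1 = i + l - 1)) ∧
      (∀ x : Fin (d - 2), ∀ j : ℕ, 1 ≤ j → j ≤ i - 1 →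
        (x : ℕ) + 1 = 1 + j → (τ x : ℕ) + 1 = j) ∧
      (∀ x : Fin (d - 2), ∀ j : ℕ, 1 ≤ j → j ≤ d - i - l - 1 →
        (x : ℕ) + 1 = i + j → (τ x : ℕ) + 1 = i + l - 1 + j) ∧
      (∀ x : Fin (d - 2), ∀ j : ℕ, 1 ≤ j → j ≤ l - 1 →
        (x : ℕ) + 1 = d - l - 1 + j → (τ x : ℕ) + 1 = i - 1 + j) ∧
      Equiv.Perm.sign τ = (-1) ^ ((d - i) * l + d - 1) := by
  obtain ⟨a, rfl⟩ := Nat.exists_eq_add_of_le' hi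
  obtain ⟨b, rfl⟩ := Nat.exists_eq_add_of_le' hl
  obtain ⟨c, rfl⟩ : ∃ c, d = a + b + c + 3 := ⟨d - (a + b + 3), by lia⟩
  have hexp : (a + b + c + 3 - (a + 1)) * (b + 1) + (a + b + c + 3) - 1 =
      a + b + c * b + (b * (b + 1) + 2 * (b + c + 2)) := by
    rw [show a + b + c + 3 - (a + 1) = b + c + 2 by lia]
    exact Nat.sub_eq_of_eq_add (by ring)
  have heven : Even (b * (b + 1) + 2 * (b + c + 2)) :=
    (Nat.even_mul_succ_self b).add (even_two_mul _)
  refine ⟨tauLeft a b c (by lia), ?_, ?_, ?_, ?_, ?_⟩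
  · grind [val_tauLeft]
  · grind [val_tauLeft]
  · grind [val_tauLeft]
  · grind [val_tauLeft]
  · rw [sign_tauLeft, hexp, pow_add _ (a + b + c * b), heven.neg_one_pow, mul_one]
end
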